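/- Correctness of Memo-la (Theorem 4): For every la-NFA A = (P, Q, q0, F, T), every input string w over Σ, and every position i ∈ {0, …, |w|}, the memoized algorithm returns the same result as the original backtracking algorithm: Match-(la,at)_{A,w}(q0, i) = Memo-la^{M0}_{A,w}(q0, i). -/

import Mathlib

namespace RegexMemo

/-! ## Generic runs, `φ`, `sub`, `sub*` -/

variable {α : Type}

/-- `φ_s(ℓ, n)`: the index of the result value of the call at index `ℓ`. -/
def phiAux (isRet : α → Bool) (s : List α) (ℓ n : ℕ) : Option ℕ :=
  match h : s[ℓ]? with
  | none => none
  | some e =>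
    if isRet e then
      if n ≤ 1 then some ℓ
      else phiAux isRet s (ℓ + 1) (n - 1)
    else phiAux isRet s (ℓ + 1) (n + 1)
termination_by s.length - ℓ
decreasing_by
  all_goals
    have hl : ℓ < s.length := by
      by_contra hc
      have : s[ℓ]? = none := List.getElem?_eq_none (by omega)
      simp [this] at h
    omega

/-- `φ_s(ℓ) = φ_s(ℓ, 0)`. -/
def phi (isRet : α → Bool) (s : List α) (ℓ : ℕ) : Option ℕ := phiAux isRet s ℓ 0

/-- `sub(s, ℓ)`: replace the memoization-table invocation at index `ℓ` (an element
`M(q,i)` together with its immediately following result) by `C(q,i)` followed by the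
subsequence `s[ℓ'+1] … s[φ_s(ℓ')]`, where `ℓ'` is the first index with `s[ℓ'] = C(q,i)`.
Here `m2c` maps a memoization element `M(q,i)` to the corresponding call element `C(q,i)`
(and everything else to `none`), and `isRet` recognizes result elements. -/
def subExpand [DecidableEq α] (m2c : α → Option α) (isRet : α → Bool)
    (s : List α) (ℓ : ℕ) : Option (List α) :=
  match s[ℓ]? with
  | some e =>
    match m2c e with
    | some c =>
      match s.findIdx? (· == c) with
      | some ℓ' =>
        match phi isRet s ℓ' with
        | some m =>
          some (s.take ℓ ++ [c] ++ ((s.drop (ℓ' + 1)).take (m - ℓ')) ++ s.drop (ℓ + 2))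
        | none => none
      | none => none
    | none => none
  | none => none

/-- `sub*`: repeatedly locate the first memoization element and expand it,
until no memoization element remains. `SubStar m2c isRet s t` means `sub*(s) = t`. -/
inductive SubStar [DecidableEq α] (m2c : α → Option α) (isRet : α → Bool) :
    List α → List α → Prop where
  | done {s : List α} : s.findIdx? (fun e => (m2c e).isSome) = none →
      SubStar m2c isRet s s
  | step {s s' t : List α} {ℓ : ℕ} :
      s.findIdx? (fun e => (m2c e).isSome) = some ℓ →
      subExpand m2c isRet s ℓ = some s' →
      SubStar m2c isRet s' t →
      SubStar m2c isRet s t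

/-- The number of (recursive) calls recorded in a run: the number of `C`/`M` elements. -/
def callCount (isCall : α → Bool) (s : List α) : ℕ := (s.filter isCall).length

variable {Sigma S : Type}

/-- Results of backtracking matching: `SuccessAt i'` or `Failure`. -/
inductive Result : Type where
  | successAt : ℕ → Result
  | failure : Result
deriving DecidableEq

/-! ## Plain NFAs -/

/-- Transitions of a plain NFA. -/
inductive Trans (Sigma S : Type) : Type where
  | eps : S → Trans Sigma S
  | branch : S → S → Trans Sigma S
  | char : Sigma → S → Trans Sigma S

/-- A (plain) NFA over the alphabet `Sigma` with (finite) state type `S`: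
an initial state, a set of accepting states, and a transition function
(whose value is only relevant on non-accepting states). -/
structure NFA (Sigma S : Type) where
  q0 : S
  F : Set S
  T : S → Trans Sigma S

/-- One ε-step: an `Eps` or `Branch` transition of a non-accepting state. -/
def NFA.epsStep (A : NFA Sigma S) (q q' : S) : Prop :=
  q ∉ A.F ∧ (A.T q = Trans.eps q' ∨ (∃ q'', A.T q = Trans.branch q' q'') ∨
    (∃ q'', A.T q = Trans.branch q'' q'))

/-- The NFA has no ε-loops. -/
def NFA.NoEpsLoops (A : NFA Sigma S) : Prop :=
  ∀ q : S, ¬ Relation.TransGen A.epsStep q q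

open Classical in
/-- The in-degree `#in(q)` of a state of a plain NFA. -/
noncomputable def NFA.inDeg [Fintype S] (A : NFA Sigma S) (q : S) : ℕ :=
  (Finset.univ.filter fun q' : S => q' ∉ A.F ∧ A.T q' = Trans.eps q).card +
  (Finset.univ.filter fun q' : S => q' ∉ A.F ∧ ∃ σ, A.T q' = Trans.char σ q).card +
  (Finset.univ.filter fun q' : S => q' ∉ A.F ∧ ∃ q'', A.T q' = Trans.branch q q'').card +
  (Finset.univ.filter fun q' : S => q' ∉ A.F ∧ ∃ q'', A.T q' = Trans.branch q'' q).card +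
  (if q = A.q0 then 1 else 0)

/-- The maximal in-degree `#in(A)` of a plain NFA. -/
noncomputable def NFA.inDegMax [Fintype S] (A : NFA Sigma S) : ℕ :=
  Finset.univ.sup fun q : S => A.inDeg q

/-- Elements of runs of `Match`/`Memo`: calls `C(q,i)`, memoization-table invocations
`M(q,i)`, and results `S(i')` and `F`. -/
inductive RunElem (S : Type) : Type where
  | call : S → ℕ → RunElem S
  | memo : S → ℕ → RunElem S
  | succ : ℕ → RunElem S
  | fail : RunElem S
deriving DecidableEq

/-- The run element recording the return of a result. -/
def Result.elem {S : Type} : Result → RunElem S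
  | .successAt i => .succ i
  | .failure => .fail

def RunElem.isRet : RunElem S → Bool
  | .succ _ => true
  | .fail => true
  | _ => false

def RunElem.isCall : RunElem S → Bool
  | .call _ _ => true
  | .memo _ _ => true
  | _ => false

/-- `M(q,i) ↦ C(q,i)`. -/
def memoToCall : RunElem S → Option (RunElem S)
  | .memo q i => some (.call q i)
  | _ => none

/-- Big-step semantics (together with the produced run) of the backtracking
matching algorithm `Match` for plain NFAs:
`MatchRun A w q i r s` means the call `Match_{A,w}(q, i)` terminates with
result `r` and produces the run `s`. -/
inductive MatchRun (A : NFA Sigma S) (w : List Sigma) :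
    S → ℕ → Result → List (RunElem S) → Prop where
  | accept {q : S} {i : ℕ} : q ∈ A.F →
      MatchRun A w q i (.successAt i) [.call q i, .succ i]
  | eps {q q' : S} {i : ℕ} {r : Result} {s : List (RunElem S)} :
      q ∉ A.F → A.T q = Trans.eps q' →
      MatchRun A w q' i r s →
      MatchRun A w q i r (.call q i :: s ++ [r.elem])
  | branchSucc {q q' q'' : S} {i i' : ℕ} {s : List (RunElem S)} :
      q ∉ A.F → A.T q = Trans.branch q' q'' →
      MatchRun A w q' i (.successAt i') s →
      MatchRun A w q i (.successAt i') (.call q i :: s ++ [RunElem.succ i'])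
  | branchFail {q q' q'' : S} {i : ℕ} {r : Result} {s s' : List (RunElem S)} :
      q ∉ A.F → A.T q = Trans.branch q' q'' →
      MatchRun A w q' i .failure s →
      MatchRun A w q'' i r s' →
      MatchRun A w q i r (.call q i :: s ++ s' ++ [r.elem])
  | charSucc {q q' : S} {σ : Sigma} {i : ℕ} {r : Result} {s : List (RunElem S)} :
      q ∉ A.F → A.T q = Trans.char σ q' →
      w[i]? = some σ →
      MatchRun A w q' (i + 1) r s →
      MatchRun A w q i r (.call q i :: s ++ [r.elem])
  | charFail {q q' : S} {σ : Sigma} {i : ℕ} :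
      q ∉ A.F → A.T q = Trans.char σ q' →
      w[i]? ≠ some σ →
      MatchRun A w q i .failure [.call q i, .fail]

/-- Record `M(q,i) := Failure` in the memoization table if the result is a failure. -/
def recFail [DecidableEq S] (M : S × ℕ → Bool) (q : S) (i : ℕ) : Result → (S × ℕ → Bool)
  | .failure => fun p => if p = (q, i) then true else M p
  | _ => M

/-- Big-step semantics (with resulting memoization table and produced run) of the
memoized backtracking matching algorithm `Memo` for plain NFAs:
`MemoRun A w q i M M' r s` means the call `Memo^M_{A,w}(q, i)` terminates with result
`r`, final memoization table `M'` (where `M p = true` means `Failure` is recorded at the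
key `p`), and produces the run `s`. -/
inductive MemoRun [DecidableEq S] (A : NFA Sigma S) (w : List Sigma) :
    S → ℕ → (S × ℕ → Bool) → (S × ℕ → Bool) → Result → List (RunElem S) → Prop where
  | memoHit {q : S} {i : ℕ} {M : S × ℕ → Bool} : M (q, i) = true →
      MemoRun A w q i M M .failure [.memo q i, .fail]
  | accept {q : S} {i : ℕ} {M : S × ℕ → Bool} : M (q, i) = false → q ∈ A.F →
      MemoRun A w q i M M (.successAt i) [.call q i, .succ i]
  | eps {q q' : S} {i : ℕ} {M M' : S × ℕ → Bool} {r : Result} {s : List (RunElem S)} :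
      M (q, i) = false → q ∉ A.F → A.T q = Trans.eps q' →
      MemoRun A w q' i M M' r s →
      MemoRun A w q i M (recFail M' q i r) r (.call q i :: s ++ [r.elem])
  | branchSucc {q q' q'' : S} {i i' : ℕ} {M M' : S × ℕ → Bool} {s : List (RunElem S)} :
      M (q, i) = false → q ∉ A.F → A.T q = Trans.branch q' q'' →
      MemoRun A w q' i M M' (.successAt i') s →
      MemoRun A w q i M M' (.successAt i') (.call q i :: s ++ [RunElem.succ i'])
  | branchFail {q q' q'' : S} {i : ℕ} {M M' M'' : S × ℕ → Bool} {r : Result}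
      {s s' : List (RunElem S)} :
      M (q, i) = false → q ∉ A.F → A.T q = Trans.branch q' q'' →
      MemoRun A w q' i M M' .failure s →
      MemoRun A w q'' i M' M'' r s' →
      MemoRun A w q i M (recFail M'' q i r) r (.call q i :: s ++ s' ++ [r.elem])
  | charSucc {q q' : S} {σ : Sigma} {i : ℕ} {M M' : S × ℕ → Bool} {r : Result}
      {s : List (RunElem S)} :
      M (q, i) = false → q ∉ A.F → A.T q = Trans.char σ q' →
      w[i]? = some σ →
      MemoRun A w q' (i + 1) M M' r s →
      MemoRun A w q i M (recFail M' q i r) r (.call q i :: s ++ [r.elem])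
  | charFail {q q' : S} {σ : Sigma} {i : ℕ} {M : S × ℕ → Bool} :
      M (q, i) = false → q ∉ A.F → A.T q = Trans.char σ q' →
      w[i]? ≠ some σ →
      MemoRun A w q i M (recFail M q i .failure) .failure [.call q i, .fail]

/-! ## NFAs with sub-automata -/

/-- Kind labels of sub-automaton transitions: positive/negative look-ahead/look-behind
and atomic grouping. -/
inductive Kind : Type where
  | pla | nla | plb | nlb | at
deriving DecidableEq

mutual
/-- An NFA with sub-automata `⟨Q, q0, F, T⟩`: a list of top-level states, an initial
state, accepting states, and a transition function (relevant on non-accepting top-level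
states) whose transitions may be labelled with further NFAs with sub-automata. -/
inductive SubNFA (Sigma S : Type) : Type where
  | mk : List S → S → List S → (S → SubTrans Sigma S) → SubNFA Sigma S

/-- Transitions of an NFA with sub-automata. -/
inductive SubTrans (Sigma S : Type) : Type where
  | eps : S → SubTrans Sigma S
  | branch : S → S → SubTrans Sigma S
  | char : Sigma → S → SubTrans Sigma S
  | sub : Kind → SubNFA Sigma S → S → SubTrans Sigma S
end

/-- Top-level states `Q`. -/
def SubNFA.Q : SubNFA Sigma S → List S
  | .mk Q _ _ _ => Q

/-- Initial state `q0`. -/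
def SubNFA.q0 : SubNFA Sigma S → S
  | .mk _ q0 _ _ => q0

/-- Accepting states `F`. -/
def SubNFA.F : SubNFA Sigma S → List S
  | .mk _ _ F _ => F

/-- Transition function `T`. -/
def SubNFA.T : SubNFA Sigma S → S → SubTrans Sigma S
  | .mk _ _ _ T => T

mutual
/-- All automata occurring within an NFA with sub-automata (including itself), each
together with its nesting depth of atomic grouping (the number of enclosing
`at`-sub-automaton boundaries). -/
def SubNFA.compsD : SubNFA Sigma S → List (SubNFA Sigma S × ℕ)
  | .mk Q q0 F T => (.mk Q q0 F T, 0) :: Q.flatMap (fun q => SubTrans.subCompsD (T q))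

def SubTrans.subCompsD : SubTrans Sigma S → List (SubNFA Sigma S × ℕ)
  | .sub k A' _ => (SubNFA.compsD A').map (fun p => (p.1, p.2 + (if k = Kind.at then 1 else 0)))
  | _ => []
end

/-- All automata occurring within `A` (including `A` itself). -/
def SubNFA.comps (A : SubNFA Sigma S) : List (SubNFA Sigma S) :=
  A.compsD.map Prod.fst

/-- The set (list) of all states `P` occurring within `A`. -/
def SubNFA.allStates (A : SubNFA Sigma S) : List S :=
  A.comps.flatMap SubNFA.Q

/-- The nesting depth of atomic grouping `ν_A(q)` of a state `q` of `A`. -/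
def SubNFA.nu [DecidableEq S] (A : SubNFA Sigma S) (q : S) : ℕ :=
  (A.compsD.map (fun p => if q ∈ p.1.Q then p.2 else 0)).sum

/-- The maximal nesting depth of atomic grouping `ν(A)`. -/
def SubNFA.nuMax [DecidableEq S] (A : SubNFA Sigma S) : ℕ :=
  (A.allStates.map A.nu).foldr max 0

/-- Local wellformedness of one automaton: the initial state is a top-level state,
accepting states are top-level states, and transitions of non-accepting top-level
states lead to top-level states. -/
def SubNFA.LocalOK (B : SubNFA Sigma S) : Prop :=
  B.q0 ∈ B.Q ∧ (∀ f ∈ B.F, f ∈ B.Q) ∧ ∀ q ∈ B.Q, q ∉ B.F →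
    match B.T q with
    | .eps q' => q' ∈ B.Q
    | .branch q' q'' => q' ∈ B.Q ∧ q'' ∈ B.Q
    | .char _ q' => q' ∈ B.Q
    | .sub _ _ q' => q' ∈ B.Q

/-- Wellformedness of an NFA with sub-automata: every component automaton is locally
wellformed, and all the state lists are disjoint and duplicate-free (so that `P` is
the disjoint union of the top-level state sets of all components). -/
def SubNFA.WF (A : SubNFA Sigma S) : Prop :=
  (∀ B ∈ A.comps, B.LocalOK) ∧ A.allStates.Nodup

/-- The kind labels of all sub-automaton transitions occurring in `A`. -/
def SubNFA.kinds [DecidableEq S] (A : SubNFA Sigma S) : List Kind :=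
  A.comps.flatMap fun B =>
    (B.Q.filter (fun q => decide (q ∉ B.F))).filterMap fun q =>
      match B.T q with
      | .sub k _ _ => some k
      | _ => none

/-- A la-NFA: all kind labels are look-around labels (for simplicity, only positive
look-ahead `pla` is treated). -/
def SubNFA.IsLaNFA [DecidableEq S] (A : SubNFA Sigma S) : Prop :=
  ∀ k ∈ A.kinds, k = Kind.pla

/-- An at-NFA: all kind labels are `at` (atomic grouping). -/
def SubNFA.IsAtNFA [DecidableEq S] (A : SubNFA Sigma S) : Prop :=
  ∀ k ∈ A.kinds, k = Kind.at

/-- A (la,at)-NFA in which (for simplicity) only the kinds `pla` and `at` occur. -/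
def SubNFA.IsLaAtNFA [DecidableEq S] (A : SubNFA Sigma S) : Prop :=
  ∀ k ∈ A.kinds, k = Kind.pla ∨ k = Kind.at

/-- One global ε-step of an NFA with sub-automata: an `Eps` or `Branch` transition, or a
`Sub` transition with a look-around kind (from the transition's source to its successor),
of a non-accepting top-level state of any component automaton. -/
def SubNFA.epsStep (A : SubNFA Sigma S) (q q' : S) : Prop :=
  ∃ B ∈ A.comps, q ∈ B.Q ∧ q ∉ B.F ∧
    (B.T q = SubTrans.eps q' ∨
     (∃ q'', B.T q = SubTrans.branch q' q'') ∨
     (∃ q'', B.T q = SubTrans.branch q'' q') ∨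
     (∃ k A'', B.T q = SubTrans.sub k A'' q' ∧ k ≠ Kind.at))

/-- The NFA with sub-automata has no ε-loops. -/
def SubNFA.NoEpsLoops (A : SubNFA Sigma S) : Prop :=
  ∀ q : S, ¬ Relation.TransGen A.epsStep q q

/-- All pairs (state, transition) of non-accepting top-level states of all component
automata of `A`. -/
def SubNFA.allTransNF [DecidableEq S] (A : SubNFA Sigma S) : List (S × SubTrans Sigma S) :=
  A.comps.flatMap fun B => (B.Q.filter (fun q => decide (q ∉ B.F))).map fun q => (q, B.T q)

/-- How many of the buckets in the definition of the in-degree of `q` a given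
transition contributes to. -/
def SubTrans.hits [DecidableEq S] (t : SubTrans Sigma S) (q : S) : ℕ :=
  match t with
  | .eps q' => if q' = q then 1 else 0
  | .char _ q' => if q' = q then 1 else 0
  | .branch q' q'' => (if q' = q then 1 else 0) + (if q'' = q then 1 else 0)
  | .sub _ _ q' => if q' = q then 1 else 0

/-- The in-degree `#in(q)` of a state of an NFA with sub-automata. -/
def SubNFA.inDeg [DecidableEq S] (A : SubNFA Sigma S) (q : S) : ℕ :=
  (A.allTransNF.map (fun p => p.2.hits q)).sum +
  (if q ∈ A.comps.map SubNFA.q0 then 1 else 0)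

/-- The maximal in-degree `#in(A)`. -/
def SubNFA.inDegMax [DecidableEq S] (A : SubNFA Sigma S) : ℕ :=
  (A.allStates.map A.inDeg).foldr max 0

/-! ## run elements for `Memo-la` and `Match-(la,at)` -/

/-- Elements of runs of `Memo-la` (and of `Match-(la,at)`): calls `C(q,i)`,
memoization-table invocations `M(q,i)`, and the results `S(i')`, `S'` (bare success),
and `F`. -/
inductive LaRunElem (S : Type) : Type where
  | call : S → ℕ → LaRunElem S
  | memo : S → ℕ → LaRunElem S
  | succAt : ℕ → LaRunElem S
  | succ : LaRunElem S
  | fail : LaRunElem S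
deriving DecidableEq

def LaRunElem.isRet : LaRunElem S → Bool
  | .succAt _ => true
  | .succ => true
  | .fail => true
  | _ => false

def LaRunElem.isCall : LaRunElem S → Bool
  | .call _ _ => true
  | .memo _ _ => true
  | _ => false

def laMemoToCall : LaRunElem S → Option (LaRunElem S)
  | .memo q i => some (.call q i)
  | _ => none

def Result.laElem {S : Type} : Result → LaRunElem S
  | .successAt i => .succAt i
  | .failure => .fail

/-! ## The backtracking matching algorithm `Match-(la,at)` -/

/-- Big-step semantics (with produced run) of the backtracking matching algorithm
`Match-(la,at)` for NFAs with sub-automata: `LAMatchRun w A q i r s` means the call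
`Match-(la,at)_{A,w}(q, i)` terminates with result `r` and produces the run `s`.
For simplicity, only the look-around kind `pla` (besides `at`) is treated. -/
inductive LAMatchRun (w : List Sigma) :
    SubNFA Sigma S → S → ℕ → Result → List (LaRunElem S) → Prop where
  | accept {A : SubNFA Sigma S} {q : S} {i : ℕ} : q ∈ A.F →
      LAMatchRun w A q i (.successAt i) [.call q i, .succAt i]
  | eps {A : SubNFA Sigma S} {q q' : S} {i : ℕ} {r : Result} {s : List (LaRunElem S)} :
      q ∉ A.F → A.T q = SubTrans.eps q' →
      LAMatchRun w A q' i r s →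
      LAMatchRun w A q i r (.call q i :: s ++ [r.laElem])
  | branchSucc {A : SubNFA Sigma S} {q q' q'' : S} {i i' : ℕ} {s : List (LaRunElem S)} :
      q ∉ A.F → A.T q = SubTrans.branch q' q'' →
      LAMatchRun w A q' i (.successAt i') s →
      LAMatchRun w A q i (.successAt i') (.call q i :: s ++ [LaRunElem.succAt i'])
  | branchFail {A : SubNFA Sigma S} {q q' q'' : S} {i : ℕ} {r : Result}
      {s s' : List (LaRunElem S)} :
      q ∉ A.F → A.T q = SubTrans.branch q' q'' →
      LAMatchRun w A q' i .failure s →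
      LAMatchRun w A q'' i r s' →
      LAMatchRun w A q i r (.call q i :: s ++ s' ++ [r.laElem])
  | charSucc {A : SubNFA Sigma S} {q q' : S} {σ : Sigma} {i : ℕ} {r : Result}
      {s : List (LaRunElem S)} :
      q ∉ A.F → A.T q = SubTrans.char σ q' →
      w[i]? = some σ →
      LAMatchRun w A q' (i + 1) r s →
      LAMatchRun w A q i r (.call q i :: s ++ [r.laElem])
  | charFail {A : SubNFA Sigma S} {q q' : S} {σ : Sigma} {i : ℕ} :
      q ∉ A.F → A.T q = SubTrans.char σ q' →
      w[i]? ≠ some σ →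
      LAMatchRun w A q i .failure [.call q i, .fail]
  | plaSucc {A A' : SubNFA Sigma S} {q q' : S} {i i' : ℕ} {r : Result}
      {s1 s2 : List (LaRunElem S)} :
      q ∉ A.F → A.T q = SubTrans.sub Kind.pla A' q' →
      LAMatchRun w A' A'.q0 i (.successAt i') s1 →
      LAMatchRun w A q' i r s2 →
      LAMatchRun w A q i r (.call q i :: s1 ++ s2 ++ [r.laElem])
  | plaFail {A A' : SubNFA Sigma S} {q q' : S} {i : ℕ} {s1 : List (LaRunElem S)} :
      q ∉ A.F → A.T q = SubTrans.sub Kind.pla A' q' →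
      LAMatchRun w A' A'.q0 i .failure s1 →
      LAMatchRun w A q i .failure (.call q i :: s1 ++ [LaRunElem.fail])
  | atSucc {A A' : SubNFA Sigma S} {q q' : S} {i i' : ℕ} {r : Result}
      {s1 s2 : List (LaRunElem S)} :
      q ∉ A.F → A.T q = SubTrans.sub Kind.at A' q' →
      LAMatchRun w A' A'.q0 i (.successAt i') s1 →
      LAMatchRun w A q' i' r s2 →
      LAMatchRun w A q i r (.call q i :: s1 ++ s2 ++ [r.laElem])
  | atFail {A A' : SubNFA Sigma S} {q q' : S} {i : ℕ} {s1 : List (LaRunElem S)} :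
      q ∉ A.F → A.T q = SubTrans.sub Kind.at A' q' →
      LAMatchRun w A' A'.q0 i .failure s1 →
      LAMatchRun w A q i .failure (.call q i :: s1 ++ [LaRunElem.fail])

/-! ## `Memo-la` -/

/-- Values of the memoization table of `Memo-la`: `Failure` or `Success`. -/
inductive LaVal : Type where
  | success : LaVal
  | failure : LaVal
deriving DecidableEq

/-- Results of `Memo-la`: `SuccessAt i'`, bare `Success`, or `Failure`. -/
inductive LaResult : Type where
  | successAt : ℕ → LaResult
  | success : LaResult
  | failure : LaResult
deriving DecidableEq

def LaVal.toResult : LaVal → LaResult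
  | .success => .success
  | .failure => .failure

def LaResult.elem {S : Type} : LaResult → LaRunElem S
  | .successAt i => .succAt i
  | .success => .succ
  | .failure => .fail

def Result.toLa : Result → LaResult
  | .successAt i => .successAt i
  | .failure => .failure

/-- The final recording of `Memo-la`: `M(q,i) := Success` if the result is
`SuccessAt i'` or `Success`, and `M(q,i) := Failure` if the result is `Failure`. -/
def laRecord [DecidableEq S] (M : S × ℕ → Option LaVal) (q : S) (i : ℕ) (r : LaResult) :
    S × ℕ → Option LaVal :=
  fun p => if p = (q, i) then
    some (match r with | .failure => LaVal.failure | _ => LaVal.success)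
  else M p

/-- Big-step semantics (with resulting memoization table and produced run) of the
memoized backtracking matching algorithm `Memo-la` for la-NFAs:
`MemoLaRun w A q i M M' r s` means the call `Memo-la^M_{A,w}(q, i)` terminates with
result `r`, final memoization table `M'`, and produces the run `s`. The memoization
table is shared between the top-level automaton and all sub-automata. -/
inductive MemoLaRun [DecidableEq S] (w : List Sigma) :
    SubNFA Sigma S → S → ℕ → (S × ℕ → Option LaVal) → (S × ℕ → Option LaVal) →
    LaResult → List (LaRunElem S) → Prop where
  | memoHit {A : SubNFA Sigma S} {q : S} {i : ℕ} {M : S × ℕ → Option LaVal} {v : LaVal} :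
      M (q, i) = some v →
      MemoLaRun w A q i M M v.toResult [.memo q i, v.toResult.elem]
  | accept {A : SubNFA Sigma S} {q : S} {i : ℕ} {M : S × ℕ → Option LaVal} :
      M (q, i) = none → q ∈ A.F →
      MemoLaRun w A q i M (laRecord M q i (.successAt i)) (.successAt i)
        [.call q i, .succAt i]
  | eps {A : SubNFA Sigma S} {q q' : S} {i : ℕ} {M M' : S × ℕ → Option LaVal}
      {r : LaResult} {s : List (LaRunElem S)} :
      M (q, i) = none → q ∉ A.F → A.T q = SubTrans.eps q' →
      MemoLaRun w A q' i M M' r s →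
      MemoLaRun w A q i M (laRecord M' q i r) r (.call q i :: s ++ [r.elem])
  | branchNoFail {A : SubNFA Sigma S} {q q' q'' : S} {i : ℕ}
      {M M' : S × ℕ → Option LaVal} {r : LaResult} {s : List (LaRunElem S)} :
      M (q, i) = none → q ∉ A.F → A.T q = SubTrans.branch q' q'' →
      MemoLaRun w A q' i M M' r s → r ≠ .failure →
      MemoLaRun w A q i M (laRecord M' q i r) r (.call q i :: s ++ [r.elem])
  | branchFail {A : SubNFA Sigma S} {q q' q'' : S} {i : ℕ}
      {M M1 M2 : S × ℕ → Option LaVal} {r : LaResult} {s1 s2 : List (LaRunElem S)} :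
      M (q, i) = none → q ∉ A.F → A.T q = SubTrans.branch q' q'' →
      MemoLaRun w A q' i M M1 .failure s1 →
      MemoLaRun w A q'' i M1 M2 r s2 →
      MemoLaRun w A q i M (laRecord M2 q i r) r (.call q i :: s1 ++ s2 ++ [r.elem])
  | charSucc {A : SubNFA Sigma S} {q q' : S} {σ : Sigma} {i : ℕ}
      {M M' : S × ℕ → Option LaVal} {r : LaResult} {s : List (LaRunElem S)} :
      M (q, i) = none → q ∉ A.F → A.T q = SubTrans.char σ q' →
      w[i]? = some σ →
      MemoLaRun w A q' (i + 1) M M' r s →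
      MemoLaRun w A q i M (laRecord M' q i r) r (.call q i :: s ++ [r.elem])
  | charFail {A : SubNFA Sigma S} {q q' : S} {σ : Sigma} {i : ℕ}
      {M : S × ℕ → Option LaVal} :
      M (q, i) = none → q ∉ A.F → A.T q = SubTrans.char σ q' →
      w[i]? ≠ some σ →
      MemoLaRun w A q i M (laRecord M q i .failure) .failure [.call q i, .fail]
  | plaSucc {A A' : SubNFA Sigma S} {q q' : S} {i : ℕ}
      {M M1 M2 : S × ℕ → Option LaVal} {r1 r : LaResult} {s1 s2 : List (LaRunElem S)} :
      M (q, i) = none → q ∉ A.F → A.T q = SubTrans.sub Kind.pla A' q' →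
      MemoLaRun w A' A'.q0 i M M1 r1 s1 → r1 ≠ .failure →
      MemoLaRun w A q' i M1 M2 r s2 →
      MemoLaRun w A q i M (laRecord M2 q i r) r (.call q i :: s1 ++ s2 ++ [r.elem])
  | plaFail {A A' : SubNFA Sigma S} {q q' : S} {i : ℕ}
      {M M1 : S × ℕ → Option LaVal} {s1 : List (LaRunElem S)} :
      M (q, i) = none → q ∉ A.F → A.T q = SubTrans.sub Kind.pla A' q' →
      MemoLaRun w A' A'.q0 i M M1 .failure s1 →
      MemoLaRun w A q i M (laRecord M1 q i .failure) .failure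
        (.call q i :: s1 ++ [LaRunElem.fail])

/-! ## `Memo-at` -/

/-- Results of `Memo-at`: `SuccessAt(i', K)` with a set `K` of delayed memoization keys,
or `Failure(j)` with a nesting depth `j`. -/
inductive AtResult (S : Type) : Type where
  | successAt : ℕ → Finset (S × ℕ) → AtResult S
  | failure : ℕ → AtResult S

/-- Elements of runs of `Memo-at`: calls `C(q,i)`, memoization-table invocations
`M(q,i)`, and results `S(i')` and `F(j)`. -/
inductive AtRunElem (S : Type) : Type where
  | call : S → ℕ → AtRunElem S
  | memo : S → ℕ → AtRunElem S
  | succ : ℕ → AtRunElem S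
  | fail : ℕ → AtRunElem S
deriving DecidableEq

def AtRunElem.isRet : AtRunElem S → Bool
  | .succ _ => true
  | .fail _ => true
  | _ => false

def AtRunElem.isCall : AtRunElem S → Bool
  | .call _ _ => true
  | .memo _ _ => true
  | _ => false

def atMemoToCall : AtRunElem S → Option (AtRunElem S)
  | .memo q i => some (.call q i)
  | _ => none

def AtResult.elem {S : Type} : AtResult S → AtRunElem S
  | .successAt i _ => .succ i
  | .failure j => .fail j

/-- `f`, converting results of `Memo-at` to results of `Match-(la,at)`. -/
def AtResult.toResult {S : Type} : AtResult S → Result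
  | .successAt i _ => .successAt i
  | .failure _ => .failure

/-- The final step of `Memo-at`: on success, the key `(q,i)` is added to the set of
delayed keys. -/
def atFinal [DecidableEq S] (q : S) (i : ℕ) : AtResult S → AtResult S
  | .successAt i' K => .successAt i' (insert (q, i) K)
  | .failure j => .failure j

/-- The final recording of `Memo-at`: `M(q,i) := Failure(j)` if the result is
`Failure(j)`. -/
def atRecord [DecidableEq S] (M : S × ℕ → Option ℕ) (q : S) (i : ℕ) :
    AtResult S → (S × ℕ → Option ℕ)
  | .failure j => fun p => if p = (q, i) then some j else M p
  | _ => M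

/-- Batch recording `M(k) := Failure(j)` for every `k ∈ K`. -/
def atBatch [DecidableEq S] (M : S × ℕ → Option ℕ) (K : Finset (S × ℕ)) (j : ℕ) :
    S × ℕ → Option ℕ :=
  fun p => if p ∈ K then some j else M p

/-- Big-step semantics (with resulting memoization table and produced run) of the
memoized backtracking matching algorithm `Memo-at` for at-NFAs:
`MemoAtRun A0 w A q i M M' r s` means the call `Memo-at^M_{A0,A,w}(q, i)` (with the
whole automaton `A0` and current sub-automaton `A`) terminates with result `r`, final
memoization table `M'`, and produces the run `s`. -/
inductive MemoAtRun [DecidableEq S] (A0 : SubNFA Sigma S) (w : List Sigma) :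
    SubNFA Sigma S → S → ℕ → (S × ℕ → Option ℕ) → (S × ℕ → Option ℕ) →
    AtResult S → List (AtRunElem S) → Prop where
  | memoHit {A : SubNFA Sigma S} {q : S} {i j : ℕ} {M : S × ℕ → Option ℕ} :
      M (q, i) = some j →
      MemoAtRun A0 w A q i M M (.failure j) [.memo q i, .fail j]
  | accept {A : SubNFA Sigma S} {q : S} {i : ℕ} {M : S × ℕ → Option ℕ} :
      M (q, i) = none → q ∈ A.F →
      MemoAtRun A0 w A q i M M (.successAt i {(q, i)}) [.call q i, .succ i]
  | eps {A : SubNFA Sigma S} {q q' : S} {i : ℕ} {M M' : S × ℕ → Option ℕ}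
      {r : AtResult S} {s : List (AtRunElem S)} :
      M (q, i) = none → q ∉ A.F → A.T q = SubTrans.eps q' →
      MemoAtRun A0 w A q' i M M' r s →
      MemoAtRun A0 w A q i M (atRecord M' q i r) (atFinal q i r)
        (.call q i :: s ++ [r.elem])
  | branchNoBT {A : SubNFA Sigma S} {q q' q'' : S} {i : ℕ} {M M' : S × ℕ → Option ℕ}
      {r : AtResult S} {s : List (AtRunElem S)} :
      M (q, i) = none → q ∉ A.F → A.T q = SubTrans.branch q' q'' →
      MemoAtRun A0 w A q' i M M' r s →
      (∀ j, r = AtResult.failure j → j ≠ A0.nu q) →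
      MemoAtRun A0 w A q i M (atRecord M' q i r) (atFinal q i r)
        (.call q i :: s ++ [r.elem])
  | branchBTSucc {A : SubNFA Sigma S} {q q' q'' : S} {i i'' : ℕ} {K : Finset (S × ℕ)}
      {M M1 M2 : S × ℕ → Option ℕ} {s1 s2 : List (AtRunElem S)} :
      M (q, i) = none → q ∉ A.F → A.T q = SubTrans.branch q' q'' →
      MemoAtRun A0 w A q' i M M1 (.failure (A0.nu q)) s1 →
      MemoAtRun A0 w A q'' i M1 M2 (.successAt i'' K) s2 →
      MemoAtRun A0 w A q i M M2 (atFinal q i (.successAt i'' K))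
        (.call q i :: s1 ++ s2 ++ [AtRunElem.succ i''])
  | branchBTFail {A : SubNFA Sigma S} {q q' q'' : S} {i j' : ℕ}
      {M M1 M2 : S × ℕ → Option ℕ} {s1 s2 : List (AtRunElem S)} :
      M (q, i) = none → q ∉ A.F → A.T q = SubTrans.branch q' q'' →
      MemoAtRun A0 w A q' i M M1 (.failure (A0.nu q)) s1 →
      MemoAtRun A0 w A q'' i M1 M2 (.failure j') s2 →
      MemoAtRun A0 w A q i M (atRecord M2 q i (.failure (min (A0.nu q) j')))
        (.failure (min (A0.nu q) j'))
        (.call q i :: s1 ++ s2 ++ [AtRunElem.fail (min (A0.nu q) j')])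
  | charSucc {A : SubNFA Sigma S} {q q' : S} {σ : Sigma} {i : ℕ}
      {M M' : S × ℕ → Option ℕ} {r : AtResult S} {s : List (AtRunElem S)} :
      M (q, i) = none → q ∉ A.F → A.T q = SubTrans.char σ q' →
      w[i]? = some σ →
      MemoAtRun A0 w A q' (i + 1) M M' r s →
      MemoAtRun A0 w A q i M (atRecord M' q i r) (atFinal q i r)
        (.call q i :: s ++ [r.elem])
  | charFail {A : SubNFA Sigma S} {q q' : S} {σ : Sigma} {i : ℕ}
      {M : S × ℕ → Option ℕ} :
      M (q, i) = none → q ∉ A.F → A.T q = SubTrans.char σ q' →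
      w[i]? ≠ some σ →
      MemoAtRun A0 w A q i M (atRecord M q i (.failure (A0.nu q)))
        (.failure (A0.nu q)) [.call q i, .fail (A0.nu q)]
  | subSuccSucc {A A' : SubNFA Sigma S} {q q' : S} {i i' i'' : ℕ}
      {K' K'' : Finset (S × ℕ)} {M M1 M2 : S × ℕ → Option ℕ}
      {s1 s2 : List (AtRunElem S)} :
      M (q, i) = none → q ∉ A.F → A.T q = SubTrans.sub Kind.at A' q' →
      MemoAtRun A0 w A' A'.q0 i M M1 (.successAt i' K') s1 →
      MemoAtRun A0 w A q' i' M1 M2 (.successAt i'' K'') s2 →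
      MemoAtRun A0 w A q i M M2 (atFinal q i (.successAt i'' (K' ∪ K'')))
        (.call q i :: s1 ++ s2 ++ [AtRunElem.succ i''])
  | subSuccFail {A A' : SubNFA Sigma S} {q q' : S} {i i' j : ℕ} {K' : Finset (S × ℕ)}
      {M M1 M2 : S × ℕ → Option ℕ} {s1 s2 : List (AtRunElem S)} :
      M (q, i) = none → q ∉ A.F → A.T q = SubTrans.sub Kind.at A' q' →
      MemoAtRun A0 w A' A'.q0 i M M1 (.successAt i' K') s1 →
      MemoAtRun A0 w A q' i' M1 M2 (.failure j) s2 →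
      MemoAtRun A0 w A q i M (atRecord (atBatch M2 K' j) q i (.failure j)) (.failure j)
        (.call q i :: s1 ++ s2 ++ [AtRunElem.fail j])
  | subFailHigh {A A' : SubNFA Sigma S} {q q' : S} {i j : ℕ}
      {M M1 : S × ℕ → Option ℕ} {s1 : List (AtRunElem S)} :
      M (q, i) = none → q ∉ A.F → A.T q = SubTrans.sub Kind.at A' q' →
      MemoAtRun A0 w A' A'.q0 i M M1 (.failure j) s1 →
      A0.nu q < j →
      MemoAtRun A0 w A q i M (atRecord M1 q i (.failure (A0.nu q)))
        (.failure (A0.nu q)) (.call q i :: s1 ++ [AtRunElem.fail (A0.nu q)])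
  | subFailLow {A A' : SubNFA Sigma S} {q q' : S} {i j : ℕ}
      {M M1 : S × ℕ → Option ℕ} {s1 : List (AtRunElem S)} :
      M (q, i) = none → q ∉ A.F → A.T q = SubTrans.sub Kind.at A' q' →
      MemoAtRun A0 w A' A'.q0 i M M1 (.failure j) s1 →
      j ≤ A0.nu q →
      MemoAtRun A0 w A q i M (atRecord M1 q i (.failure j)) (.failure j)
        (.call q i :: s1 ++ [AtRunElem.fail j])

/-! ## The combined algorithm `Memo-(la,at)` -/

/-- Values of the memoization table of `Memo-(la,at)`: `Success` or `Failure(j)`. -/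
inductive LaAtVal : Type where
  | success : LaAtVal
  | failure : ℕ → LaAtVal

/-- Results of `Memo-(la,at)`: `SuccessAt(i', K)`, bare `Success`, or `Failure(j)`. -/
inductive LaAtResult (S : Type) : Type where
  | successAt : ℕ → Finset (S × ℕ) → LaAtResult S
  | success : LaAtResult S
  | failure : ℕ → LaAtResult S

def LaAtVal.toResult {S : Type} : LaAtVal → LaAtResult S
  | .success => .success
  | .failure j => .failure j

/-- `f`, converting results of `Memo-(la,at)` to results of `Match-(la,at)`
(undefined on the bare value `Success`). -/
def LaAtResult.toResult? {S : Type} : LaAtResult S → Option Result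
  | .successAt i _ => some (.successAt i)
  | .success => none
  | .failure _ => some .failure

def laAtFinal [DecidableEq S] (q : S) (i : ℕ) : LaAtResult S → LaAtResult S
  | .successAt i' K => .successAt i' (insert (q, i) K)
  | r => r

def laAtRecord [DecidableEq S] (M : S × ℕ → Option LaAtVal) (q : S) (i : ℕ) :
    LaAtResult S → (S × ℕ → Option LaAtVal)
  | .successAt _ _ => M
  | .success => fun p => if p = (q, i) then some LaAtVal.success else M p
  | .failure j => fun p => if p = (q, i) then some (LaAtVal.failure j) else M p

def laAtBatch [DecidableEq S] (M : S × ℕ → Option LaAtVal) (K : Finset (S × ℕ))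
    (v : LaAtVal) : S × ℕ → Option LaAtVal :=
  fun p => if p ∈ K then some v else M p

/-- Big-step semantics (with resulting memoization table and the number of recursive
calls made) of the combined memoized backtracking matching algorithm `Memo-(la,at)`:
`MemoLaAtRun w A0 A q i M M' r n` means the call `Memo-(la,at)^M_{A0,A,w}(q, i)`
terminates with result `r`, final memoization table `M'`, making `n` calls in total.
On a positive look-ahead transition, the sub-automaton becomes the new whole automaton
(so nesting depths of atomic grouping are reset by look-around operators). -/
inductive MemoLaAtRun [DecidableEq S] (w : List Sigma) :
    SubNFA Sigma S → SubNFA Sigma S → S → ℕ →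
    (S × ℕ → Option LaAtVal) → (S × ℕ → Option LaAtVal) → LaAtResult S → ℕ → Prop where
  | memoHit {A0 A : SubNFA Sigma S} {q : S} {i : ℕ} {M : S × ℕ → Option LaAtVal}
      {v : LaAtVal} :
      M (q, i) = some v →
      MemoLaAtRun w A0 A q i M M v.toResult 1
  | accept {A0 A : SubNFA Sigma S} {q : S} {i : ℕ} {M : S × ℕ → Option LaAtVal} :
      M (q, i) = none → q ∈ A.F →
      MemoLaAtRun w A0 A q i M M (.successAt i {(q, i)}) 1
  | eps {A0 A : SubNFA Sigma S} {q q' : S} {i : ℕ} {M M' : S × ℕ → Option LaAtVal}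
      {r : LaAtResult S} {n : ℕ} :
      M (q, i) = none → q ∉ A.F → A.T q = SubTrans.eps q' →
      MemoLaAtRun w A0 A q' i M M' r n →
      MemoLaAtRun w A0 A q i M (laAtRecord M' q i (laAtFinal q i r)) (laAtFinal q i r)
        (n + 1)
  | branchNoBT {A0 A : SubNFA Sigma S} {q q' q'' : S} {i : ℕ}
      {M M' : S × ℕ → Option LaAtVal} {r : LaAtResult S} {n : ℕ} :
      M (q, i) = none → q ∉ A.F → A.T q = SubTrans.branch q' q'' →
      MemoLaAtRun w A0 A q' i M M' r n →
      (∀ j, r = LaAtResult.failure j → j ≠ A0.nu q) →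
      MemoLaAtRun w A0 A q i M (laAtRecord M' q i (laAtFinal q i r)) (laAtFinal q i r)
        (n + 1)
  | branchBTFail {A0 A : SubNFA Sigma S} {q q' q'' : S} {i j' : ℕ}
      {M M1 M2 : S × ℕ → Option LaAtVal} {n1 n2 : ℕ} :
      M (q, i) = none → q ∉ A.F → A.T q = SubTrans.branch q' q'' →
      MemoLaAtRun w A0 A q' i M M1 (.failure (A0.nu q)) n1 →
      MemoLaAtRun w A0 A q'' i M1 M2 (.failure j') n2 →
      MemoLaAtRun w A0 A q i M
        (laAtRecord M2 q i (.failure (min (A0.nu q) j')))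
        (.failure (min (A0.nu q) j')) (n1 + n2 + 1)
  | branchBTOther {A0 A : SubNFA Sigma S} {q q' q'' : S} {i : ℕ}
      {M M1 M2 : S × ℕ → Option LaAtVal} {r : LaAtResult S} {n1 n2 : ℕ} :
      M (q, i) = none → q ∉ A.F → A.T q = SubTrans.branch q' q'' →
      MemoLaAtRun w A0 A q' i M M1 (.failure (A0.nu q)) n1 →
      MemoLaAtRun w A0 A q'' i M1 M2 r n2 →
      (∀ j, r ≠ LaAtResult.failure j) →
      MemoLaAtRun w A0 A q i M (laAtRecord M2 q i (laAtFinal q i r)) (laAtFinal q i r)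
        (n1 + n2 + 1)
  | charSucc {A0 A : SubNFA Sigma S} {q q' : S} {σ : Sigma} {i : ℕ}
      {M M' : S × ℕ → Option LaAtVal} {r : LaAtResult S} {n : ℕ} :
      M (q, i) = none → q ∉ A.F → A.T q = SubTrans.char σ q' →
      w[i]? = some σ →
      MemoLaAtRun w A0 A q' (i + 1) M M' r n →
      MemoLaAtRun w A0 A q i M (laAtRecord M' q i (laAtFinal q i r)) (laAtFinal q i r)
        (n + 1)
  | charFail {A0 A : SubNFA Sigma S} {q q' : S} {σ : Sigma} {i : ℕ}
      {M : S × ℕ → Option LaAtVal} :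
      M (q, i) = none → q ∉ A.F → A.T q = SubTrans.char σ q' →
      w[i]? ≠ some σ →
      MemoLaAtRun w A0 A q i M (laAtRecord M q i (.failure (A0.nu q)))
        (.failure (A0.nu q)) 1
  | plaSuccAt {A0 A A' : SubNFA Sigma S} {q q' : S} {i i' : ℕ} {K' : Finset (S × ℕ)}
      {M M1 M2 : S × ℕ → Option LaAtVal} {r : LaAtResult S} {n1 n2 : ℕ} :
      M (q, i) = none → q ∉ A.F → A.T q = SubTrans.sub Kind.pla A' q' →
      MemoLaAtRun w A' A' A'.q0 i M M1 (.successAt i' K') n1 →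
      MemoLaAtRun w A0 A q' i (laAtBatch M1 K' LaAtVal.success) M2 r n2 →
      MemoLaAtRun w A0 A q i M (laAtRecord M2 q i (laAtFinal q i r)) (laAtFinal q i r)
        (n1 + n2 + 1)
  | plaBare {A0 A A' : SubNFA Sigma S} {q q' : S} {i : ℕ}
      {M M1 M2 : S × ℕ → Option LaAtVal} {r : LaAtResult S} {n1 n2 : ℕ} :
      M (q, i) = none → q ∉ A.F → A.T q = SubTrans.sub Kind.pla A' q' →
      MemoLaAtRun w A' A' A'.q0 i M M1 .success n1 →
      MemoLaAtRun w A0 A q' i M1 M2 r n2 →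
      MemoLaAtRun w A0 A q i M (laAtRecord M2 q i (laAtFinal q i r)) (laAtFinal q i r)
        (n1 + n2 + 1)
  | plaFail {A0 A A' : SubNFA Sigma S} {q q' : S} {i j : ℕ}
      {M M1 : S × ℕ → Option LaAtVal} {n1 : ℕ} :
      M (q, i) = none → q ∉ A.F → A.T q = SubTrans.sub Kind.pla A' q' →
      MemoLaAtRun w A' A' A'.q0 i M M1 (.failure j) n1 →
      MemoLaAtRun w A0 A q i M (laAtRecord M1 q i (.failure (A0.nu q)))
        (.failure (A0.nu q)) (n1 + 1)
  | atSuccSucc {A0 A A' : SubNFA Sigma S} {q q' : S} {i i' i'' : ℕ}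
      {K' K'' : Finset (S × ℕ)} {M M1 M2 : S × ℕ → Option LaAtVal} {n1 n2 : ℕ} :
      M (q, i) = none → q ∉ A.F → A.T q = SubTrans.sub Kind.at A' q' →
      MemoLaAtRun w A0 A' A'.q0 i M M1 (.successAt i' K') n1 →
      MemoLaAtRun w A0 A q' i' M1 M2 (.successAt i'' K'') n2 →
      MemoLaAtRun w A0 A q i M M2
        (laAtFinal q i (.successAt i'' (K' ∪ K''))) (n1 + n2 + 1)
  | atSuccBare {A0 A A' : SubNFA Sigma S} {q q' : S} {i i' : ℕ} {K' : Finset (S × ℕ)}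
      {M M1 M2 : S × ℕ → Option LaAtVal} {n1 n2 : ℕ} :
      M (q, i) = none → q ∉ A.F → A.T q = SubTrans.sub Kind.at A' q' →
      MemoLaAtRun w A0 A' A'.q0 i M M1 (.successAt i' K') n1 →
      MemoLaAtRun w A0 A q' i' M1 M2 .success n2 →
      MemoLaAtRun w A0 A q i M
        (laAtRecord (laAtBatch M2 K' LaAtVal.success) q i .success) .success
        (n1 + n2 + 1)
  | atSuccFail {A0 A A' : SubNFA Sigma S} {q q' : S} {i i' j : ℕ} {K' : Finset (S × ℕ)}
      {M M1 M2 : S × ℕ → Option LaAtVal} {n1 n2 : ℕ} :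
      M (q, i) = none → q ∉ A.F → A.T q = SubTrans.sub Kind.at A' q' →
      MemoLaAtRun w A0 A' A'.q0 i M M1 (.successAt i' K') n1 →
      MemoLaAtRun w A0 A q' i' M1 M2 (.failure j) n2 →
      MemoLaAtRun w A0 A q i M
        (laAtRecord (laAtBatch M2 K' (LaAtVal.failure j)) q i (.failure j))
        (.failure j) (n1 + n2 + 1)
  | atBare {A0 A A' : SubNFA Sigma S} {q q' : S} {i : ℕ}
      {M M1 : S × ℕ → Option LaAtVal} {n1 : ℕ} :
      M (q, i) = none → q ∉ A.F → A.T q = SubTrans.sub Kind.at A' q' →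
      MemoLaAtRun w A0 A' A'.q0 i M M1 .success n1 →
      MemoLaAtRun w A0 A q i M (laAtRecord M1 q i .success) .success (n1 + 1)
  | atFailHigh {A0 A A' : SubNFA Sigma S} {q q' : S} {i j : ℕ}
      {M M1 : S × ℕ → Option LaAtVal} {n1 : ℕ} :
      M (q, i) = none → q ∉ A.F → A.T q = SubTrans.sub Kind.at A' q' →
      MemoLaAtRun w A0 A' A'.q0 i M M1 (.failure j) n1 →
      A0.nu q < j →
      MemoLaAtRun w A0 A q i M (laAtRecord M1 q i (.failure (A0.nu q)))
        (.failure (A0.nu q)) (n1 + 1)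
  | atFailLow {A0 A A' : SubNFA Sigma S} {q q' : S} {i j : ℕ}
      {M M1 : S × ℕ → Option LaAtVal} {n1 : ℕ} :
      M (q, i) = none → q ∉ A.F → A.T q = SubTrans.sub Kind.at A' q' →
      MemoLaAtRun w A0 A' A'.q0 i M M1 (.failure j) n1 →
      j ≤ A0.nu q →
      MemoLaAtRun w A0 A q i M (laAtRecord M1 q i (.failure j)) (.failure j) (n1 + 1)



/-! ## Auxiliary facts for the proof -/

theorem LAMatchRun.det {w : List Sigma} {B : SubNFA Sigma S} {q : S} {i : ℕ} {r r' : Result}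
    {s s' : List (LaRunElem S)} (h : LAMatchRun w B q i r s) (h' : LAMatchRun w B q i r' s') :
    r = r' := by
  induction h generalizing r' s' with
  | accept hF => cases h' <;> first | rfl | contradiction
  | eps hF hT _ ih =>
    cases h' <;> first | contradiction | simp_all
    rename_i h; exact ih h
  | branchSucc hF hT _ ih =>
    cases h' <;> first | contradiction | simp_all
    · rename_i h; exact Result.successAt.inj (ih h)
    · rename_i h _; exact absurd (ih h) (by simp)
  | branchFail hF hT _ _ ih1 ih2 =>
    cases h' <;> first | contradiction | simp_all
    · rename_i h; exact absurd (ih1 h) (by simp)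
    · rename_i h; exact ih2 h
  | charSucc hF hT hw _ ih =>
    cases h' <;> first | contradiction | simp_all
    rename_i h; exact ih h
  | charFail hF hT hw => cases h' <;> first | rfl | contradiction | simp_all
  | plaSucc hF hT _ _ ih1 ih2 =>
    cases h' <;> first | contradiction | simp_all
    · rename_i h; exact ih2 h
    · rename_i h; exact absurd (ih1 h) (by simp)
  | plaFail hF hT _ ih =>
    cases h' <;> first | rfl | contradiction | simp_all
    rename_i h _; exact absurd (ih h) (by simp)
  | atSucc hF hT _ _ ih1 ih2 =>
    cases h' <;> first | contradiction | simp_all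
    · rename_i h1 h2
      have := Result.successAt.inj (ih1 h1)
      subst this
      exact ih2 h2
    · rename_i h; exact absurd (ih1 h) (by simp)
  | atFail hF hT _ ih =>
    cases h' <;> first | rfl | contradiction | simp_all
    rename_i h _; exact absurd (ih h) (by simp)

theorem SubNFA.comps_cons (B : SubNFA Sigma S) :
    B.comps = B :: B.Q.flatMap (fun q => (SubTrans.subCompsD (B.T q)).map Prod.fst) := by
  cases B
  simp [SubNFA.comps, SubNFA.compsD, SubNFA.Q, SubNFA.T, List.map_flatMap]

theorem SubNFA.sub_comps {B A' : SubNFA Sigma S} {q q' : S} {k : Kind} (hq : q ∈ B.Q)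
    (hT : B.T q = SubTrans.sub k A' q') :
    (B :: A'.comps).Sublist B.comps := by
  rw [B.comps_cons]
  apply List.Sublist.cons_cons
  have : A'.comps = (SubTrans.subCompsD (B.T q)).map Prod.fst := by
    rw [hT]; simp [SubNFA.comps, SubTrans.subCompsD, Function.comp_def]
  rw [this, List.flatMap]
  exact List.sublist_flatten_of_mem (List.mem_map.2 ⟨q, hq, rfl⟩)

theorem SubNFA.self_mem_comps (B : SubNFA Sigma S) : B ∈ B.comps := by
  rw [B.comps_cons]; simp

theorem SubNFA.Q_sub (B : SubNFA Sigma S) {q : S} (hq : q ∈ B.Q) : q ∈ B.allStates :=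
  List.mem_flatMap.2 ⟨B, B.self_mem_comps, hq⟩

theorem SubNFA.WF.unique {A B C : SubNFA Sigma S} (h : A.WF) (hB : B ∈ A.comps)
    (hC : C ∈ A.comps) {q : S} (hqB : q ∈ B.Q) (hqC : q ∈ C.Q) : B = C := by
  have h2 := (List.nodup_flatMap.1 h.2).2
  by_contra hne
  have hs : Std.Symm (Function.onFun List.Disjoint (SubNFA.Q (Sigma := Sigma) (S := S))) :=
    ⟨fun a b hab => List.Disjoint.symm hab⟩
  exact h2.forall hB hC hne hqB hqC

theorem SubNFA.WF.disj {A B A' : SubNFA Sigma S} (h : A.WF) (hB : B.comps.Sublist A.comps)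
    {q q' p : S} {k : Kind} (hq : q ∈ B.Q) (hT : B.T q = SubTrans.sub k A' q')
    (hp : p ∈ B.Q) : p ∉ A'.allStates := by
  have h1 := ((SubNFA.sub_comps hq hT).trans hB).flatMap (f := SubNFA.Q) |>.nodup h.2
  rw [List.flatMap_cons] at h1
  exact fun h' => (List.disjoint_of_nodup_append h1) hp h'

theorem SubNFA.IsLaNFA.kind [DecidableEq S] {A B A' : SubNFA Sigma S} (h : A.IsLaNFA)
    (hB : B ∈ A.comps) {q q' : S} {k : Kind} (hq : q ∈ B.Q) (hF : q ∉ B.F)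
    (hT : B.T q = SubTrans.sub k A' q') : k = Kind.pla := by
  apply h
  refine List.mem_flatMap.2 ⟨B, hB, List.mem_filterMap.2 ⟨q, ?_, by simp [hT]⟩⟩
  simp [hq, hF]

/-- The claim a result of `Memo-la` makes about `Match-(la,at)`. -/
def Res (w : List Sigma) (B : SubNFA Sigma S) (q : S) (i : ℕ) : LaResult → Prop
  | .successAt i' => ∃ s, LAMatchRun w B q i (.successAt i') s
  | .success => ∃ i' s, LAMatchRun w B q i (.successAt i') s
  | .failure => ∃ s, LAMatchRun w B q i .failure s

/-- Every entry of the memoization table is correct. -/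
def Snd (w : List Sigma) (A : SubNFA Sigma S) (M : S × ℕ → Option LaVal) : Prop :=
  ∀ B ∈ A.comps, ∀ q ∈ B.Q, ∀ i v, M (q, i) = some v → Res w B q i v.toResult

theorem Snd.record [DecidableEq S] {w : List Sigma} {A B : SubNFA Sigma S} (hWF : A.WF)
    {M : S × ℕ → Option LaVal} (hM : Snd w A M) (hB : B ∈ A.comps) {q : S} (hq : q ∈ B.Q)
    {i : ℕ} {r : LaResult} (hr : Res w B q i r) : Snd w A (laRecord M q i r) := by
  intro C hC p hp j v hv
  unfold laRecord at hv
  split_ifs at hv with hpq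
  · obtain ⟨rfl, rfl⟩ := Prod.mk.inj hpq
    obtain rfl := hWF.unique hB hC hq hp
    cases r with
    | successAt i' =>
      obtain rfl : LaVal.success = v := by simpa using hv
      exact ⟨i', hr⟩
    | success =>
      obtain rfl : LaVal.success = v := by simpa using hv
      exact hr
    | failure =>
      obtain rfl : LaVal.failure = v := by simpa using hv
      exact hr
  · exact hM C hC p hp j v hv

/-- Transfer of results along a tail call. -/
theorem Res.mono {w : List Sigma} {B : SubNFA Sigma S} {q q' : S} {i i' : ℕ} {r : LaResult}
    (h : Res w B q i r)
    (f : ∀ r s, LAMatchRun w B q i r s → ∃ s', LAMatchRun w B q' i' r s') :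
    Res w B q' i' r := by
  cases r with
  | successAt j => obtain ⟨s, hs⟩ := h; exact f _ _ hs
  | success => obtain ⟨j, s, hs⟩ := h; exact ⟨j, f _ _ hs⟩
  | failure => obtain ⟨s, hs⟩ := h; exact f _ _ hs

theorem Res.mono_ne {w : List Sigma} {B C : SubNFA Sigma S} {q q' : S} {i i' : ℕ} {r : LaResult}
    (h : Res w B q i r) (hr : r ≠ .failure)
    (f : ∀ j s, LAMatchRun w B q i (.successAt j) s →
      ∃ s', LAMatchRun w C q' i' (.successAt j) s') :
    Res w C q' i' r := by
  cases r with
  | successAt j => obtain ⟨s, hs⟩ := h; exact f _ _ hs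
  | success => obtain ⟨j, s, hs⟩ := h; exact ⟨j, f _ _ hs⟩
  | failure => exact absurd rfl hr

theorem Res.succ_of_ne {w : List Sigma} {B : SubNFA Sigma S} {q : S} {i : ℕ} {r : LaResult}
    (h : Res w B q i r) (hr : r ≠ .failure) :
    ∃ j s, LAMatchRun w B q i (.successAt j) s := by
  cases r with
  | successAt j => exact ⟨j, h⟩
  | success => exact h
  | failure => exact absurd rfl hr

/-- Closure facts for the successor states of a non-accepting state. -/
theorem SubNFA.WF.localOK {A B : SubNFA Sigma S} (h : A.WF) (hB : B.comps.Sublist A.comps) :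
    B.LocalOK := h.1 B (hB.subset B.self_mem_comps)

theorem SubNFA.WF.eps {A B : SubNFA Sigma S} (h : A.WF) (hB : B.comps.Sublist A.comps)
    {q q' : S} (hq : q ∈ B.Q) (hF : q ∉ B.F) (hT : B.T q = .eps q') : q' ∈ B.Q := by
  have := (h.localOK hB).2.2 q hq hF
  simpa [hT] using this

theorem SubNFA.WF.branch {A B : SubNFA Sigma S} (h : A.WF) (hB : B.comps.Sublist A.comps)
    {q q' q'' : S} (hq : q ∈ B.Q) (hF : q ∉ B.F) (hT : B.T q = .branch q' q'') :
    q' ∈ B.Q ∧ q'' ∈ B.Q := by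
  have := (h.localOK hB).2.2 q hq hF
  simpa [hT] using this

theorem SubNFA.WF.char {A B : SubNFA Sigma S} (h : A.WF) (hB : B.comps.Sublist A.comps)
    {q q' : S} {σ : Sigma} (hq : q ∈ B.Q) (hF : q ∉ B.F) (hT : B.T q = .char σ q') :
    q' ∈ B.Q := by
  have := (h.localOK hB).2.2 q hq hF
  simpa [hT] using this

theorem SubNFA.WF.sub {A B A' : SubNFA Sigma S} (h : A.WF) (hB : B.comps.Sublist A.comps)
    {q q' : S} {k : Kind} (hq : q ∈ B.Q) (hF : q ∉ B.F) (hT : B.T q = .sub k A' q') :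
    q' ∈ B.Q ∧ A'.comps.Sublist B.comps ∧ A'.comps.Sublist A.comps ∧ A'.q0 ∈ A'.Q := by
  have h1 := (h.localOK hB).2.2 q hq hF
  have h2 : A'.comps.Sublist B.comps :=
    (List.sublist_cons_self _ _).trans (SubNFA.sub_comps hq hT)
  refine ⟨by simpa [hT] using h1, h2, h2.trans hB, (h.localOK (h2.trans hB)).1⟩

theorem laRecord_of_ne [DecidableEq S] {M : S × ℕ → Option LaVal} {q : S} {i : ℕ} {r : LaResult}
    {p : S × ℕ} (h : p.1 ≠ q) : laRecord M q i r p = M p := by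
  unfold laRecord
  rw [if_neg]
  rintro rfl
  exact h rfl

/-- Soundness of `Memo-la`, together with the frame property. -/
theorem MemoLaRun.sound [DecidableEq S] {w : List Sigma} {A B : SubNFA Sigma S} (hWF : A.WF)
    {q : S} {i : ℕ} {M M' : S × ℕ → Option LaVal} {r : LaResult} {s : List (LaRunElem S)}
    (h : MemoLaRun w B q i M M' r s) (hB : B.comps.Sublist A.comps) (hq : q ∈ B.Q)
    (hM : Snd w A M) :
    (Res w B q i r ∧ Snd w A M') ∧ ∀ p : S × ℕ, p.1 ∉ B.allStates → M' p = M p := by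
  induction h with
  | memoHit hv =>
    exact ⟨⟨hM _ (hB.subset (SubNFA.self_mem_comps _)) _ hq _ _ hv, hM⟩, fun _ _ => rfl⟩
  | @accept B q i M hn hF =>
    have hR : Res w B q i (.successAt i) := ⟨_, .accept hF⟩
    refine ⟨⟨hR, hM.record hWF (hB.subset B.self_mem_comps) hq hR⟩, fun p hp => ?_⟩
    exact laRecord_of_ne (fun e => hp (e ▸ B.Q_sub hq))
  | @eps B q q' i M M' r s hn hF hT _ ih =>
    obtain ⟨⟨h1, h2⟩, h3⟩ := ih hB (hWF.eps hB hq hF hT) hM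
    have hR : Res w B q i r := h1.mono fun r s hs => ⟨_, .eps hF hT hs⟩
    refine ⟨⟨hR, h2.record hWF (hB.subset B.self_mem_comps) hq hR⟩, fun p hp => ?_⟩
    rw [laRecord_of_ne (fun e => hp (e ▸ B.Q_sub hq)), h3 p hp]
  | @branchNoFail B q q' q'' i M M' r s hn hF hT _ hr ih =>
    obtain ⟨⟨h1, h2⟩, h3⟩ := ih hB (hWF.branch hB hq hF hT).1 hM
    have hR : Res w B q i r := h1.mono_ne hr fun r s hs => ⟨_, .branchSucc hF hT hs⟩
    refine ⟨⟨hR, h2.record hWF (hB.subset B.self_mem_comps) hq hR⟩, fun p hp => ?_⟩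
    rw [laRecord_of_ne (fun e => hp (e ▸ B.Q_sub hq)), h3 p hp]
  | @branchFail B q q' q'' i M M1 M2 r s1 s2 hn hF hT _ _ ih1 ih2 =>
    obtain ⟨⟨⟨s', h1⟩, h2⟩, h3⟩ := ih1 hB (hWF.branch hB hq hF hT).1 hM
    obtain ⟨⟨k1, k2⟩, k3⟩ := ih2 hB (hWF.branch hB hq hF hT).2 h2
    have hR : Res w B q i r := k1.mono fun r s hs => ⟨_, .branchFail hF hT h1 hs⟩
    refine ⟨⟨hR, k2.record hWF (hB.subset B.self_mem_comps) hq hR⟩, fun p hp => ?_⟩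
    rw [laRecord_of_ne (fun e => hp (e ▸ B.Q_sub hq)), k3 p hp, h3 p hp]
  | @charSucc B q q' σ i M M' r s hn hF hT hw _ ih =>
    obtain ⟨⟨h1, h2⟩, h3⟩ := ih hB (hWF.char hB hq hF hT) hM
    have hR : Res w B q i r := h1.mono fun r s hs => ⟨_, .charSucc hF hT hw hs⟩
    refine ⟨⟨hR, h2.record hWF (hB.subset B.self_mem_comps) hq hR⟩, fun p hp => ?_⟩
    rw [laRecord_of_ne (fun e => hp (e ▸ B.Q_sub hq)), h3 p hp]
  | @charFail B q q' σ i M hn hF hT hw =>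
    have hR : Res w B q i .failure := ⟨_, .charFail hF hT hw⟩
    refine ⟨⟨hR, hM.record hWF (hB.subset B.self_mem_comps) hq hR⟩, fun p hp => ?_⟩
    exact laRecord_of_ne (fun e => hp (e ▸ B.Q_sub hq))
  | @plaSucc B A' q q' i M M1 M2 r1 r s1 s2 hn hF hT _ hr1 _ ih1 ih2 =>
    obtain ⟨hq', hs1, hs2, hq0⟩ := hWF.sub hB hq hF hT
    obtain ⟨⟨h1, h2⟩, h3⟩ := ih1 hs2 hq0 hM
    obtain ⟨⟨k1, k2⟩, k3⟩ := ih2 hB hq' h2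
    obtain ⟨j, t, ht⟩ := h1.succ_of_ne hr1
    have hR : Res w B q i r := k1.mono fun r s hs => ⟨_, .plaSucc hF hT ht hs⟩
    refine ⟨⟨hR, k2.record hWF (hB.subset B.self_mem_comps) hq hR⟩, fun p hp => ?_⟩
    rw [laRecord_of_ne (fun e => hp (e ▸ B.Q_sub hq)), k3 p hp,
      h3 p (fun h => hp ((hs1.flatMap (f := SubNFA.Q)).subset h))]
  | @plaFail B A' q q' i M M1 s1 hn hF hT _ ih =>
    obtain ⟨hq', hs1, hs2, hq0⟩ := hWF.sub hB hq hF hT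
    obtain ⟨⟨⟨t, ht⟩, h2⟩, h3⟩ := ih hs2 hq0 hM
    have hR : Res w B q i .failure := ⟨_, .plaFail hF hT ht⟩
    refine ⟨⟨hR, h2.record hWF (hB.subset B.self_mem_comps) hq hR⟩, fun p hp => ?_⟩
    rw [laRecord_of_ne (fun e => hp (e ▸ B.Q_sub hq)),
      h3 p (fun h => hp ((hs1.flatMap (f := SubNFA.Q)).subset h))]

/-- No success is recorded for a top-level state of `B`. -/
def Fresh (B : SubNFA Sigma S) (M : S × ℕ → Option LaVal) : Prop :=
  ∀ q ∈ B.Q, ∀ i, M (q, i) ≠ some .success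

theorem Fresh.record [DecidableEq S] {B : SubNFA Sigma S} {M : S × ℕ → Option LaVal}
    (h : Fresh B M) (q : S) (i : ℕ) : Fresh B (laRecord M q i .failure) := by
  intro p hp j
  unfold laRecord
  split_ifs
  · simp
  · exact h p hp j

theorem Res.fail_iff {w : List Sigma} {B : SubNFA Sigma S} {q : S} {i : ℕ} {r : Result}
    {r' : LaResult} {s : List (LaRunElem S)}
    (h : Res w B q i r') (hm : LAMatchRun w B q i r s) : r' = .failure ↔ r = .failure := by
  cases r' with
  | successAt j => obtain ⟨t, ht⟩ := h; simp [hm.det ht]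
  | success => obtain ⟨j, t, ht⟩ := h; simp [hm.det ht]
  | failure => obtain ⟨t, ht⟩ := h; simp [hm.det ht]

/-- Completeness of `Memo-la`. -/
theorem LAMatchRun.complete [DecidableEq S] {w : List Sigma} {A B : SubNFA Sigma S}
    (hWF : A.WF) (hLa : A.IsLaNFA) {q : S} {i : ℕ} {r : Result} {s : List (LaRunElem S)}
    (h : LAMatchRun w B q i r s) (hB : B.comps.Sublist A.comps) (hq : q ∈ B.Q)
    (M : S × ℕ → Option LaVal) (hM : Snd w A M) :
    ∃ M' r' s', MemoLaRun w B q i M M' r' s' ∧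
      (Fresh B M → r' = r.toLa ∧ (r = .failure → Fresh B M')) := by
  have hit : ∀ {B : SubNFA Sigma S} {q : S} {i : ℕ} {r : Result} {s : List (LaRunElem S)}
      {M : S × ℕ → Option LaVal}, LAMatchRun w B q i r s → B.comps.Sublist A.comps → q ∈ B.Q →
      Snd w A M → (M (q, i) = none → ∃ M' r' s', MemoLaRun w B q i M M' r' s' ∧
        (Fresh B M → r' = r.toLa ∧ (r = .failure → Fresh B M'))) →
      ∃ M' r' s', MemoLaRun w B q i M M' r' s' ∧
        (Fresh B M → r' = r.toLa ∧ (r = .failure → Fresh B M')) := by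
    intro B q i r s M hm hB hq hM hrest
    cases hv : M (q, i) with
    | none => exact hrest hv
    | some v =>
      refine ⟨_, _, _, .memoHit hv, fun hf => ⟨?_, fun _ => hf⟩⟩
      cases v with
      | success => exact absurd hv (hf q hq i)
      | failure =>
        obtain ⟨t, ht⟩ := hM B (hB.subset B.self_mem_comps) q hq i _ hv
        rw [hm.det ht]; rfl
  induction h generalizing M with
  | @accept B q i hF =>
    refine hit (.accept hF) hB hq hM fun hn => ⟨_, _, _, .accept hn hF, fun _ => ⟨rfl, ?_⟩⟩
    simp
  | @eps B q q' i r s hF hT hm ih =>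
    refine hit (.eps hF hT hm) hB hq hM fun hn => ?_
    obtain ⟨M', r', s', h1, h2⟩ := ih hB (hWF.eps hB hq hF hT) M hM
    refine ⟨_, _, _, .eps hn hF hT h1, fun hf => ⟨(h2 hf).1, ?_⟩⟩
    rintro rfl
    rw [(h2 hf).1]
    exact ((h2 hf).2 rfl).record q i
  | @branchSucc B q q' q'' i i' s hF hT hm ih =>
    refine hit (.branchSucc hF hT hm) hB hq hM fun hn => ?_
    have hq' := (hWF.branch hB hq hF hT).1
    obtain ⟨M', r', s', h1, h2⟩ := ih hB hq' M hM
    have h3 := ((h1.sound hWF hB hq' hM).1.1).fail_iff hm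
    refine ⟨_, _, _, .branchNoFail hn hF hT h1 (by simp [h3]), fun hf => ⟨(h2 hf).1, ?_⟩⟩
    simp
  | @branchFail B q q' q'' i r s s' hF hT hm hm' ih ih' =>
    refine hit (.branchFail hF hT hm hm') hB hq hM fun hn => ?_
    have hq' := hWF.branch hB hq hF hT
    obtain ⟨M', r', s', h1, h2⟩ := ih hB hq'.1 M hM
    have h3 := h1.sound hWF hB hq'.1 hM
    obtain rfl := (h3.1.1.fail_iff hm).2 rfl
    obtain ⟨M2, r2, s2, k1, k2⟩ := ih' hB hq'.2 M' h3.1.2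
    refine ⟨_, _, _, .branchFail hn hF hT h1 k1, fun hf => ?_⟩
    have k := k2 ((h2 hf).2 rfl)
    refine ⟨k.1, ?_⟩
    rintro rfl
    rw [k.1]
    exact (k.2 rfl).record q i
  | @charSucc B q q' σ i r s hF hT hw hm ih =>
    refine hit (.charSucc hF hT hw hm) hB hq hM fun hn => ?_
    obtain ⟨M', r', s', h1, h2⟩ := ih hB (hWF.char hB hq hF hT) M hM
    refine ⟨_, _, _, .charSucc hn hF hT hw h1, fun hf => ⟨(h2 hf).1, ?_⟩⟩
    rintro rfl
    rw [(h2 hf).1]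
    exact ((h2 hf).2 rfl).record q i
  | @charFail B q q' σ i hF hT hw =>
    exact hit (.charFail hF hT hw) hB hq hM fun hn =>
      ⟨_, _, _, .charFail hn hF hT hw, fun hf => ⟨rfl, fun _ => hf.record q i⟩⟩
  | @plaSucc B A' q q' i i' r s1 s2 hF hT hm hm' ih ih' =>
    refine hit (.plaSucc hF hT hm hm') hB hq hM fun hn => ?_
    obtain ⟨hq', hs1, hs2, hq0⟩ := hWF.sub hB hq hF hT
    obtain ⟨M', r', s', h1, h2⟩ := ih hs2 hq0 M hM
    have h3 := h1.sound hWF hs2 hq0 hM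
    have h4 := h3.1.1.fail_iff hm
    obtain ⟨M2, r2, s2, k1, k2⟩ := ih' hB hq' M' h3.1.2
    refine ⟨_, _, _, .plaSucc hn hF hT h1 (by simp [h4]) k1, fun hf => ?_⟩
    have k := k2 (fun p hp j => by
      rw [h3.2 (p, j) (hWF.disj hB hq hT hp)]; exact hf p hp j)
    refine ⟨k.1, ?_⟩
    rintro rfl
    rw [k.1]
    exact (k.2 rfl).record q i
  | @plaFail B A' q q' i s1 hF hT hm ih =>
    refine hit (.plaFail hF hT hm) hB hq hM fun hn => ?_
    obtain ⟨hq', hs1, hs2, hq0⟩ := hWF.sub hB hq hF hT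
    obtain ⟨M', r', s', h1, h2⟩ := ih hs2 hq0 M hM
    have h3 := h1.sound hWF hs2 hq0 hM
    obtain rfl := (h3.1.1.fail_iff hm).2 rfl
    refine ⟨_, _, _, .plaFail hn hF hT h1, fun hf => ⟨rfl, fun _ => ?_⟩⟩
    have k : Fresh B M' := fun p hp j => by
      rw [h3.2 (p, j) (hWF.disj hB hq hT hp)]; exact hf p hp j
    exact k.record q i
  | @atSucc B A' q q' i i' r s1 s2 hF hT =>
    exact absurd (hLa.kind (hB.subset B.self_mem_comps) hq hF hT) (by simp)
  | @atFail B A' q q' i s1 hF hT =>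
    exact absurd (hLa.kind (hB.subset B.self_mem_comps) hq hF hT) (by simp)

/-- **Theorem 4** (correctness of `Memo-la`): for every la-NFA `A`, every input string
`w`, and every position `i ∈ {0, …, |w|}`, the memoized algorithm returns the same
result as the original backtracking algorithm:
`Match-(la,at)_{A,w}(q0, i) = Memo-la^{M0}_{A,w}(q0, i)`. -/
theorem memoLa_correct {Sigma S : Type} [DecidableEq S]
    (A : SubNFA Sigma S) (hWF : A.WF) (hLa : A.IsLaNFA) (hLoop : A.NoEpsLoops)
    (w : List Sigma) (i : ℕ) (hi : i ≤ w.length) :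
    ∀ r : Result,
      (∃ s, LAMatchRun w A A.q0 i r s) ↔
        (∃ M' s, MemoLaRun w A A.q0 i (fun _ => none) M' r.toLa s) := by
  intro r
  have hq0 : A.q0 ∈ A.Q := (hWF.localOK (List.Sublist.refl _)).1
  have hM : Snd w A (fun _ => none) := by
    intro B _ q _ j v hv
    simp at hv
  constructor
  · rintro ⟨s, hs⟩
    obtain ⟨M', r', s', h1, h2⟩ := hs.complete hWF hLa (List.Sublist.refl _) hq0 _ hM
    have h3 := (h2 (fun _ _ _ => by simp)).1
    exact ⟨M', s', h3 ▸ h1⟩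
  · rintro ⟨M', s, hs⟩
    have h1 := (hs.sound hWF (List.Sublist.refl _) hq0 hM).1.1
    cases r <;> exact h1

end RegexMemo
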